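/- arXiv:2601.08338 — 3 statements merged into one kernel-verified Lean document; each statement's English description precedes it below -/
import Mathlib

section
/- Let M₁, …, M_p be matrices over a field, where Mᵢ has gᵢ ≥ 1 rows and m columns, and suppose that for each i there is a set Tᵢ of column indices with |Tᵢ| ≥ gᵢ such that the columns of Mᵢ indexed by Tᵢ form a full spark frame and every column of Mᵢ with index outside Tᵢ is zero. Then the minimum of |S| over all sets S ⊆ {1, …, m} satisfying rank((Mᵢ)_S) = gᵢ for all i equals the minimum of |S| over all sets S ⊆ {1, …, m} satisfying |S ∩ Tᵢ| ≥ gᵢ for all i; moreover these two feasible families of sets S coincide. -/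
/-!
The rank of `(Mᵢ)_S` is the dimension of the span of the columns indexed by `S`. Columns outside
`Tᵢ` vanish, so this span is generated by the columns indexed by `S ∩ Tᵢ`; hence the rank is at
most `|S ∩ Tᵢ|`, and rank `gᵢ` forces `|S ∩ Tᵢ| ≥ gᵢ`. Conversely, if `|S ∩ Tᵢ| ≥ gᵢ`, any `gᵢ` of
these columns are independent by the full spark property, so the rank is at least `gᵢ`, and it
cannot exceed the number `gᵢ` of rows. The two feasible families are thus equal, and so are
their minimal cardinalities.
-/

open Matrix

/-- The submatrix of `M` formed by the columns indexed by `S`. -/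
def colSub {K : Type*} [Field K] {g m : ℕ} (M : Matrix (Fin g) (Fin m) K)
    (S : Finset (Fin m)) : Matrix (Fin g) {j // j ∈ S} K :=
  M.submatrix id Subtype.val

/-- The columns of the `g`-row matrix `M` indexed by `T` form a full spark
frame: every `g`-element subset of `T` indexes a linearly independent family of
columns of `M`. -/
def IsFullSpark {K : Type*} [Field K] {g m : ℕ} (M : Matrix (Fin g) (Fin m) K)
    (T : Finset (Fin m)) : Prop :=
  ∀ S' ⊆ T, S'.card = g →
    LinearIndependent K (fun j : {j // j ∈ S'} => fun i => M i j.val)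

lemma rank_colSub_le_card_inter {K : Type*} [Field K] {g m : ℕ} (M : Matrix (Fin g) (Fin m) K)
    (T S : Finset (Fin m)) (hzero : ∀ j ∉ T, ∀ r, M r j = 0) :
    (colSub M S).rank ≤ (S ∩ T).card := by
  classical
  rw [Matrix.rank_eq_finrank_span_cols]
  have hsub : Submodule.span K (Set.range (colSub M S).col) ≤
      Submodule.span K (((S ∩ T).image M.col : Finset (Fin g → K)) : Set (Fin g → K)) := by
    rw [Submodule.span_le]
    rintro _ ⟨⟨j, hj⟩, rfl⟩
    by_cases hjT : j ∈ T
    · exact Submodule.subset_span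
        (Finset.mem_coe.2 (Finset.mem_image.2 ⟨j, Finset.mem_inter.2 ⟨hj, hjT⟩, rfl⟩))
    · have h0 : (colSub M S).col ⟨j, hj⟩ = 0 := funext fun r => hzero j hjT r
      rw [h0]
      exact Submodule.zero_mem _
  exact (Submodule.finrank_mono hsub).trans
    ((finrank_span_finset_le_card _).trans Finset.card_image_le)

lemma IsFullSpark.rank_colSub {K : Type*} [Field K] {g m : ℕ} {M : Matrix (Fin g) (Fin m) K}
    {T S : Finset (Fin m)} (h : IsFullSpark M T) (hS : g ≤ (S ∩ T).card) :
    (colSub M S).rank = g := by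
  obtain ⟨S', hS', hcard⟩ := Finset.exists_subset_card_eq hS
  have hli := h S' (hS'.trans Finset.inter_subset_right) hcard
  apply le_antisymm
  · simpa using (colSub M S).rank_le_card_height
  · rw [Matrix.rank_eq_finrank_span_cols]
    have hsub : Submodule.span K (Set.range fun (j : {j // j ∈ S'}) (i : Fin g) => M i j.val) ≤
        Submodule.span K (Set.range (colSub M S).col) := by
      apply Submodule.span_mono
      rintro _ ⟨⟨j, hj⟩, rfl⟩
      exact ⟨⟨j, (Finset.mem_inter.1 (hS' hj)).1⟩, rfl⟩
    have hfin := finrank_span_eq_card hli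
    rw [Fintype.card_coe, hcard] at hfin
    exact hfin.symm.le.trans (Submodule.finrank_mono hsub)

/-- **Equivalence of minimal actuator selection and set multicover.**
If, for each `i`, the columns of `Mᵢ` indexed by `Tᵢ` form a full spark frame
and all other columns of `Mᵢ` are zero, then a set `S` of columns satisfies all
rank constraints `rank (Mᵢ)_S = gᵢ` iff it satisfies all covering constraints
`|S ∩ Tᵢ| ≥ gᵢ`, and the minimal cardinalities of feasible sets coincide. -/
theorem minimal_selection_eq_set_multicover {K : Type*} [Field K] {p m : ℕ}
    (g : Fin p → ℕ) (hg : ∀ i, 1 ≤ g i)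
    (M : (i : Fin p) → Matrix (Fin (g i)) (Fin m) K)
    (T : Fin p → Finset (Fin m))
    (hT : ∀ i, g i ≤ (T i).card)
    (hspark : ∀ i, IsFullSpark (M i) (T i))
    (hzero : ∀ i, ∀ j ∉ T i, ∀ r, M i r j = 0) :
    (∀ S : Finset (Fin m),
        (∀ i, (colSub (M i) S).rank = g i) ↔ (∀ i, g i ≤ (S ∩ T i).card)) ∧
    sInf {k : ℕ | ∃ S : Finset (Fin m),
        (∀ i, (colSub (M i) S).rank = g i) ∧ S.card = k} =
      sInf {k : ℕ | ∃ S : Finset (Fin m),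
        (∀ i, g i ≤ (S ∩ T i).card) ∧ S.card = k} := by
  have key : ∀ S : Finset (Fin m),
      (∀ i, (colSub (M i) S).rank = g i) ↔ (∀ i, g i ≤ (S ∩ T i).card) := fun S =>
    forall_congr' fun i =>
      ⟨fun h => h.symm.le.trans (rank_colSub_le_card_inter (M i) (T i) S (hzero i)),
        fun h => (hspark i).rank_colSub h⟩
  exact ⟨key, by simp only [key]⟩
end

section
/- Let M be a g×m matrix over a field with g ≥ 1 and let f be a natural number. If a set S of column indices contains a subset S′ with |S′| = g + f such that the columns of M indexed by S′ form a full spark frame, then for every subset F ⊆ S with |F| ≤ f one has rank(M_{S∖F}) = g; that is, S is a feasible robust selection tolerating f faults. -/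
/-!
At most `f` of the `g + f` columns in `S'` are removed, so `g` of them survive; the full spark
property makes these linearly independent, hence their span, which lies in the column space of
the surviving submatrix, has dimension `g`. The rank cannot exceed the number `g` of rows.
-/

open Matrix

/-- If `S` contains a subset `S'` of cardinality `g + f` whose columns form a
full spark frame, then `S` is a feasible robust selection tolerating `f`
faults: for every `F ⊆ S` with `|F| ≤ f`, `rank M_{S∖F} = g`. -/
theorem subset_fullSpark_robust_feasible {K : Type*} [Field K] {g m : ℕ}
    (M : Matrix (Fin g) (Fin m) K) (hg : 1 ≤ g) (f : ℕ)
    (S S' : Finset (Fin m)) (hsub : S' ⊆ S) (hcard : S'.card = g + f)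
    (hspark : IsFullSpark M S') :
    ∀ F ⊆ S, F.card ≤ f → (colSub M (S \ F)).rank = g := by
  intro F _ hF
  have hle : g ≤ (S' \ F).card := by
    have := Finset.le_card_sdiff F S'
    omega
  obtain ⟨T, hT, hTc⟩ := Finset.exists_subset_card_eq hle
  have hli := hspark T (hT.trans Finset.sdiff_subset) hTc
  refine le_antisymm (by simpa using (colSub M (S \ F)).rank_le_card_height) ?_
  have hfr := finrank_span_eq_card hli
  rw [Fintype.card_coe, hTc] at hfr
  rw [Matrix.rank_eq_finrank_span_cols]
  have hmono : Submodule.span K (Set.range fun j : {j // j ∈ T} => fun i => M i j.val) ≤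
      Submodule.span K (Set.range (colSub M (S \ F)).col) := by
    apply Submodule.span_mono
    rintro _ ⟨j, rfl⟩
    exact ⟨⟨j.1, Finset.sdiff_subset_sdiff hsub le_rfl (hT j.2)⟩, rfl⟩
  calc g = _ := hfr.symm
    _ ≤ _ := Submodule.finrank_mono hmono
end

section
/- Let M be a g×m matrix over a field with g ≥ 1, let f be a natural number, and let T be a set of column indices such that the columns of M indexed by T form a full spark frame (with |T| ≥ g) and every column of M with index outside T is zero. Then there exists a set S ⊆ {1, …, m} such that for every subset F ⊆ S with |F| ≤ f one has rank(M_{S∖F}) = g if and only if |T| ≥ g + f. -/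
/-! The rank of a column submatrix only sees the columns in `T`, since the others vanish, so it is
at most the number of selected columns lying in `T` (`colSub_rank_le`); conversely, by the full
spark property, `g` selected columns of `T` already give rank `g` (`colSub_rank_eq`).
Hence the best selection is `S = T`, and the worst faults are those that remove columns of `T`:
the selection survives all of them exactly when `g` columns of `T` remain after deleting any `f`. -/

open Matrix

theorem colSub_rank_le {K : Type*} [Field K] {g m : ℕ} (M : Matrix (Fin g) (Fin m) K)
    (T R : Finset (Fin m)) (hzero : ∀ j ∉ T, ∀ i, M i j = 0) :
    (colSub M R).rank ≤ (R ∩ T).card := by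
  classical
  rw [Matrix.rank_eq_finrank_span_cols]
  have hle : Submodule.span K (Set.range (colSub M R).col) ≤
      Submodule.span K (((R ∩ T).image M.col : Finset (Fin g → K)) : Set (Fin g → K)) := by
    rw [Submodule.span_le]
    rintro _ ⟨⟨j, hj⟩, rfl⟩
    by_cases hjT : j ∈ T
    · apply Submodule.subset_span
      rw [Finset.mem_coe]
      exact Finset.mem_image_of_mem M.col (Finset.mem_inter.2 ⟨hj, hjT⟩)
    · have h0 : (colSub M R).col ⟨j, hj⟩ = 0 := funext fun i => hzero j hjT i
      rw [h0]
      exact Submodule.zero_mem _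
  exact (Submodule.finrank_mono hle).trans
    ((finrank_span_finset_le_card _).trans Finset.card_image_le)

theorem colSub_rank_eq {K : Type*} [Field K] {g m : ℕ} (M : Matrix (Fin g) (Fin m) K)
    (T R : Finset (Fin m)) (hspark : IsFullSpark M T) (hRT : R ⊆ T) (hR : g ≤ R.card) :
    (colSub M R).rank = g := by
  refine le_antisymm ((Matrix.rank_le_card_height _).trans_eq (Fintype.card_fin g)) ?_
  obtain ⟨S', hS'R, hcard⟩ := Finset.exists_subset_card_eq hR
  have hli := hspark S' (hS'R.trans hRT) hcard
  have hspan := finrank_span_eq_card hli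
  rw [Fintype.card_coe, hcard] at hspan
  rw [Matrix.rank_eq_finrank_span_cols]
  refine hspan.symm.trans_le (Submodule.finrank_mono (Submodule.span_mono ?_))
  rintro _ ⟨⟨j, hj⟩, rfl⟩
  exact ⟨⟨j, hS'R hj⟩, rfl⟩

/-- **Feasibility of robust selection.** If the columns of `M` indexed by `T`
(with `|T| ≥ g`) form a full spark frame and all other columns are zero, then a
robust selection tolerating `f` faults exists iff `|T| ≥ g + f`. -/
theorem robust_selection_feasible_iff {K : Type*} [Field K] {g m : ℕ}
    (M : Matrix (Fin g) (Fin m) K) (hg : 1 ≤ g) (f : ℕ)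
    (T : Finset (Fin m)) (hT : g ≤ T.card)
    (hspark : IsFullSpark M T)
    (hzero : ∀ j ∉ T, ∀ i, M i j = 0) :
    (∃ S : Finset (Fin m), ∀ F ⊆ S, F.card ≤ f → (colSub M (S \ F)).rank = g) ↔
      g + f ≤ T.card := by
  constructor
  · rintro ⟨S, hS⟩
    -- The adversary deletes as many selected columns of `T` as the fault budget allows.
    obtain ⟨F, hF, hFc⟩ := Finset.exists_subset_card_eq (min_le_right f (S ∩ T).card)
    have hrank := hS F (hF.trans Finset.inter_subset_left) (hFc.trans_le (min_le_left _ _))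
    have hle := colSub_rank_le M T (S \ F) hzero
    have heq : (S \ F) ∩ T = (S ∩ T) \ F := by
      ext j
      simp only [Finset.mem_inter, Finset.mem_sdiff]
      tauto
    rw [hrank, heq, Finset.card_sdiff_of_subset hF, hFc] at hle
    have hST : (S ∩ T).card ≤ T.card := Finset.card_le_card Finset.inter_subset_right
    omega
  · intro h
    refine ⟨T, fun F hF hFc => colSub_rank_eq M T _ hspark Finset.sdiff_subset ?_⟩
    rw [Finset.card_sdiff_of_subset hF]
    omega
end
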